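/- Non-conforming majorant for the gradient part: let ṽ ∈ L²(Ω;ℝ^N), set E := ∇û − A^{−1}ṽ, and let E = g + A^{−1}ψ with g ∈ 𝒢, ψ ∈ D₀ be its Helmholtz decomposition. Then for every v ∈ L²(Ω;ℝ^N) possessing a weak divergence div v ∈ L²₊₁(Ω), ‖g‖_A ≤ M₊(A^{−1}ṽ,v) := c_{N,α}‖f + div v‖_{L²₊₁(Ω)} + ‖A^{−1}(ṽ − v)‖_A. -/

import Mathlib

open MeasureTheory Filter Topology
open scoped RealInnerProductSpace

noncomputable section

/-- Euclidean space `ℝ^N`. -/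
abbrev Euc (N : ℕ) := EuclideanSpace ℝ (Fin N)

/-- The Poincaré constant `c_N = 2/(N-2)`. -/
def cN (N : ℕ) : ℝ := 2 / ((N : ℝ) - 2)

variable {N : ℕ}

/-- Squared weighted `L²_s(Ω)` norm: `∫_Ω (1+|x|²)^s u(x)² dx`. -/
def sqL2 (Ω : Set (Euc N)) (s : ℝ) (u : Euc N → ℝ) : ℝ :=
  ∫ x in Ω, (1 + ‖x‖ ^ 2) ^ s * u x ^ 2

/-- Weighted `L²_s(Ω)` norm. -/
def nrmL2 (Ω : Set (Euc N)) (s : ℝ) (u : Euc N → ℝ) : ℝ :=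
  Real.sqrt (sqL2 Ω s u)

/-- Membership in the weighted space `L²_s(Ω)` (scalar functions). -/
def MemL2 (Ω : Set (Euc N)) (s : ℝ) (u : Euc N → ℝ) : Prop :=
  AEStronglyMeasurable u (volume.restrict Ω) ∧
    Integrable (fun x => (1 + ‖x‖ ^ 2) ^ s * u x ^ 2) (volume.restrict Ω)

/-- Squared weighted `L²_s(Ω;ℝ^N)` norm for vector fields. -/
def sqL2V (Ω : Set (Euc N)) (s : ℝ) (v : Euc N → Euc N) : ℝ :=
  ∫ x in Ω, (1 + ‖x‖ ^ 2) ^ s * ‖v x‖ ^ 2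

/-- Weighted `L²_s(Ω;ℝ^N)` norm for vector fields. -/
def nrmL2V (Ω : Set (Euc N)) (s : ℝ) (v : Euc N → Euc N) : ℝ :=
  Real.sqrt (sqL2V Ω s v)

/-- Membership in the weighted space `L²_s(Ω;ℝ^N)` (vector fields). -/
def MemL2V (Ω : Set (Euc N)) (s : ℝ) (v : Euc N → Euc N) : Prop :=
  AEStronglyMeasurable v (volume.restrict Ω) ∧
    Integrable (fun x => (1 + ‖x‖ ^ 2) ^ s * ‖v x‖ ^ 2) (volume.restrict Ω)

/-- Test functions: `φ ∈ C_c^∞(Ω)`. -/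
def IsTest (Ω : Set (Euc N)) (φ : Euc N → ℝ) : Prop :=
  ContDiff ℝ (⊤ : ℕ∞) φ ∧ HasCompactSupport φ ∧ tsupport φ ⊆ Ω

/-- `g` is the weak gradient of `u` on `Ω`:
`∫_Ω u ∇φ = −∫_Ω φ g` for all test functions `φ`. -/
def IsWeakGrad (Ω : Set (Euc N)) (u : Euc N → ℝ) (g : Euc N → Euc N) : Prop :=
  ∀ φ : Euc N → ℝ, IsTest Ω φ →
    (∫ x in Ω, u x • gradient φ x) = - ∫ x in Ω, φ x • g x

/-- `d` is the weak divergence of the vector field `v` on `Ω`: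
`∫_Ω v·∇φ = −∫_Ω d φ` for all test functions `φ`. -/
def IsWeakDiv (Ω : Set (Euc N)) (v : Euc N → Euc N) (d : Euc N → ℝ) : Prop :=
  ∀ φ : Euc N → ℝ, IsTest Ω φ →
    (∫ x in Ω, ⟪v x, gradient φ x⟫) = - ∫ x in Ω, d x * φ x

/-- `u ∈ H¹°₋₁(Ω)` with weak gradient `g`: `u ∈ L²₋₁(Ω)`, `g ∈ L²(Ω;ℝ^N)` is the weak
gradient of `u`, and `u` is approximated by test functions in the natural norms. -/
def MemH10 (Ω : Set (Euc N)) (u : Euc N → ℝ) (g : Euc N → Euc N) : Prop :=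
  MemL2 Ω (-1) u ∧ MemL2V Ω 0 g ∧ IsWeakGrad Ω u g ∧
    ∃ φ : ℕ → Euc N → ℝ, (∀ n, IsTest Ω (φ n)) ∧
      Tendsto (fun n => nrmL2 Ω (-1) (fun x => u x - φ n x)) atTop (𝓝 0) ∧
      Tendsto (fun n => nrmL2V Ω 0 (fun x => g x - gradient (φ n) x)) atTop (𝓝 0)

/-- `g ∈ 𝒢`, the closure in `L²(Ω;ℝ^N)` of `{∇φ : φ ∈ C_c^∞(Ω)}`. -/
def MemG (Ω : Set (Euc N)) (g : Euc N → Euc N) : Prop :=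
  MemL2V Ω 0 g ∧
    ∃ φ : ℕ → Euc N → ℝ, (∀ n, IsTest Ω (φ n)) ∧
      Tendsto (fun n => nrmL2V Ω 0 (fun x => g x - gradient (φ n) x)) atTop (𝓝 0)

/-- `ψ ∈ D₀`, the set of weakly divergence-free fields in `L²(Ω;ℝ^N)`. -/
def MemD0 (Ω : Set (Euc N)) (ψ : Euc N → Euc N) : Prop :=
  MemL2V Ω 0 ψ ∧
    ∀ φ : Euc N → ℝ, IsTest Ω φ → (∫ x in Ω, ⟪ψ x, gradient φ x⟫) = 0

/-- The coefficient matrix field `A : Ω → ℝ^{N×N}`: measurable, essentially bounded,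
symmetric, and uniformly coercive (`A(x)ξ·ξ ≥ α⁻²|ξ|²` for a.e. `x ∈ Ω`). -/
structure Coeff (N : ℕ) (Ω : Set (Euc N)) where
  A : Euc N → Euc N →L[ℝ] Euc N
  α : ℝ
  α_pos : 0 < α
  meas : ∀ ξ : Euc N, AEStronglyMeasurable (fun x => A x ξ) (volume.restrict Ω)
  bdd : ∃ C : ℝ, ∀ᵐ x ∂(volume.restrict Ω), ∀ ξ : Euc N, ‖A x ξ‖ ≤ C * ‖ξ‖
  symm : ∀ x : Euc N, ∀ ξ η : Euc N, ⟪A x ξ, η⟫ = ⟪ξ, A x η⟫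
  coer : ∀ᵐ x ∂(volume.restrict Ω), ∀ ξ : Euc N, α⁻¹ ^ 2 * ‖ξ‖ ^ 2 ≤ ⟪A x ξ, ξ⟫

/-- The weighted inner product `⟨v,w⟩_A = ∫_Ω A v · w dx`. -/
def ipA (Ω : Set (Euc N)) (A : Euc N → Euc N →L[ℝ] Euc N) (v w : Euc N → Euc N) : ℝ :=
  ∫ x in Ω, ⟪A x (v x), w x⟫

/-- The squared `A`-weighted norm `‖v‖²_A = ∫_Ω A v · v dx`. -/
def sqA (Ω : Set (Euc N)) (A : Euc N → Euc N →L[ℝ] Euc N) (v : Euc N → Euc N) : ℝ :=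
  ipA Ω A v v

/-- The `A`-weighted norm `‖v‖_A`. -/
def nrmA (Ω : Set (Euc N)) (A : Euc N → Euc N →L[ℝ] Euc N) (v : Euc N → Euc N) : ℝ :=
  Real.sqrt (sqA Ω A v)

/-- `w = A⁻¹ v` (a.e. on `Ω`), with `w ∈ L²(Ω;ℝ^N)`. -/
def IsAInv (Ω : Set (Euc N)) (A : Euc N → Euc N →L[ℝ] Euc N) (v w : Euc N → Euc N) : Prop :=
  MemL2V Ω 0 w ∧ ∀ᵐ x ∂(volume.restrict Ω), A x (w x) = v x

/-!
Since `ψ` is divergence free, testing `g = ∇û - A⁻¹ṽ - A⁻¹ψ` against a gradient gives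
`⟨g, ∇φ⟩_A = ∫ (f + div v) φ - ⟨A⁻¹(ṽ - v), ∇φ⟩_A`. Duality of `L²₁` and `L²₋₁` together with
the Hardy inequality `‖φ‖_{L²₋₁} ≤ c_N ‖∇φ‖` bounds the right-hand side by `M₊ ‖∇φ‖_A`. As gradients
of test functions are dense in `𝒢 ∋ g`, this forces `‖g‖_A² ≤ M₊ ‖g‖_A`.
-/

section Hardy

variable {E F : Type*} [NormedAddCommGroup E] [NormedAddCommGroup F] [NormedSpace ℝ F]

theorem integrable_fderiv_apply_self [NormedSpace ℝ E] [MeasurableSpace E] [BorelSpace E]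
    {μ : Measure E} [IsFiniteMeasureOnCompacts μ] {η : E → F} (hη : ContDiff ℝ 1 η)
    (hsupp : HasCompactSupport η) : Integrable (fun x => fderiv ℝ η x x) μ :=
  have hsupp' : HasCompactSupport fun x => fderiv ℝ η x x :=
    (hsupp.fderiv ℝ).mono fun x hx h0 => hx (DFunLike.congr_fun h0 x)
  ((hη.continuous_fderiv one_ne_zero).clm_apply
    continuous_id).integrable_of_hasCompactSupport hsupp'

theorem integral_fderiv_apply_self [NormedSpace ℝ E] [FiniteDimensional ℝ E] [MeasurableSpace E]
    [BorelSpace E] {μ : Measure E} [μ.IsAddHaarMeasure] {η : E → F} (hη : ContDiff ℝ 1 η)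
    (hsupp : HasCompactSupport η) :
    ∫ x, fderiv ℝ η x x ∂μ = -(Module.finrank ℝ E : ℝ) • ∫ x, η x ∂μ := by
  let b := Module.finBasis ℝ E
  let coord i : E →L[ℝ] ℝ := (b.coord i).toContinuousLinearMap
  have hcoord (i) : fderiv ℝ (coord i) = fun _ => coord i := by ext1 x; exact (coord i).fderiv
  have hcoord_self (i) : coord i (b i) = 1 := by simp [coord]
  have hη_int : Integrable η μ := hη.continuous.integrable_of_hasCompactSupport hsupp
  have hterm_int (i) : Integrable (fun x => coord i x • fderiv ℝ η x (b i)) μ :=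
    ((coord i).continuous.smul ((hη.continuous_fderiv one_ne_zero).clm_apply
      continuous_const)).integrable_of_hasCompactSupport (hsupp.fderiv_apply ℝ (b i)).smul_left
  have hterm (i) : ∫ x, coord i x • fderiv ℝ η x (b i) ∂μ = -∫ x, η x ∂μ := by
    rw [integral_smul_fderiv_eq_neg_fderiv_smul_of_integrable _ (hterm_int i)
      (((coord i).continuous.smul hη.continuous).integrable_of_hasCompactSupport hsupp.smul_left)
      (fun x _ => (coord i).differentiableAt) (fun x _ => hη.differentiable one_ne_zero x)]
    · simp only [hcoord, hcoord_self, one_smul]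
    · simpa only [hcoord, hcoord_self, one_smul] using hη_int
  have hsum (x) : fderiv ℝ η x x = ∑ i, coord i x • fderiv ℝ η x (b i) := calc
    fderiv ℝ η x x = fderiv ℝ η x (∑ i, coord i x • b i) := congrArg _ (b.sum_repr x).symm
    _ = ∑ i, coord i x • fderiv ℝ η x (b i) := by simp only [map_sum, map_smul]
  simp only [hsum, integral_finsetSum _ fun i _ => hterm_int i, hterm, Finset.sum_const,
    Finset.card_univ, Fintype.card_fin]
  module

variable [InnerProductSpace ℝ E]

theorem contDiff_inv_one_add_norm_sq {n : WithTop ℕ∞} :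
    ContDiff ℝ n fun x : E => (1 + ‖x‖ ^ 2)⁻¹ :=
  (contDiff_const.add (contDiff_norm_sq ℝ)).inv fun x => by positivity

theorem hasFDerivAt_inv_one_add_norm_sq (x : E) :
    HasFDerivAt (fun y : E => (1 + ‖y‖ ^ 2)⁻¹) (-((1 + ‖x‖ ^ 2) ^ 2)⁻¹ • 2 • innerSL ℝ x) x :=
  (hasDerivAt_inv (by positivity : 1 + ‖x‖ ^ 2 ≠ 0)).comp_hasFDerivAt x
    ((hasStrictFDerivAt_norm_sq x).hasFDerivAt.const_add 1)

theorem fderiv_sq_mul_inv_one_add_norm_sq_apply_self {φ : E → ℝ} {x : E}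
    (hφ : DifferentiableAt ℝ φ x) :
    fderiv ℝ (fun y => φ y ^ 2 * (1 + ‖y‖ ^ 2)⁻¹) x x =
      2 * φ x * fderiv ℝ φ x x * (1 + ‖x‖ ^ 2)⁻¹
        - 2 * φ x ^ 2 * ‖x‖ ^ 2 * ((1 + ‖x‖ ^ 2)⁻¹) ^ 2 := by
  have h := (hφ.hasFDerivAt.pow 2).mul (hasFDerivAt_inv_one_add_norm_sq x)
  rw [show fderiv ℝ (fun y => φ y ^ 2 * (1 + ‖y‖ ^ 2)⁻¹) x = _ from h.fderiv]
  simp only [add_apply, smul_apply, neg_apply, coe_innerSL_apply, real_inner_self_eq_norm_sq,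
    neg_smul, smul_neg, Nat.add_one_sub_one, pow_one, nsmul_eq_mul, Nat.cast_ofNat, smul_eq_mul,
    inv_pow]
  ring

/-- Expand `0 ≤ (d - k/2 * |p| * q * r)²` with `q = (1 + r²)⁻¹`. -/
theorem hardy_pointwise {k p a d r : ℝ} (hk : 0 ≤ k) (ha : |a| ≤ d * r) :
    (k / 2) ^ 2 * ((1 + r ^ 2)⁻¹ * p ^ 2) ≤
      d ^ 2 + k / 2 * ((k + 2) * (p ^ 2 * (1 + r ^ 2)⁻¹) +
        (2 * p * a * (1 + r ^ 2)⁻¹ - 2 * p ^ 2 * r ^ 2 * ((1 + r ^ 2)⁻¹) ^ 2)) := by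
  set q := (1 + r ^ 2)⁻¹ with hq
  have : 0 < q := by positivity
  have hr : r ^ 2 * q = 1 - q := by rw [hq]; field_simp; ring
  have hcross : -(p * a) ≤ |p| * (d * r) :=
    (neg_le_abs _).trans (abs_mul p a ▸ mul_le_mul_of_nonneg_left ha (abs_nonneg p))
  calc (k / 2) ^ 2 * (q * p ^ 2)
      ≤ (k / 2) ^ 2 * (q * p ^ 2) + (d - k / 2 * |p| * q * r) ^ 2
          + (k ^ 2 / 4 + k) * q ^ 2 * p ^ 2 + k * q * (|p| * (d * r) + p * a) := by
        have : 0 ≤ |p| * (d * r) + p * a := by linarith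
        have : 0 ≤ (k ^ 2 / 4 + k) * q ^ 2 * p ^ 2 + k * q * (|p| * (d * r) + p * a) := by
          positivity
        linarith [sq_nonneg (d - k / 2 * |p| * q * r)]
    _ = _ := by
        linear_combination (k ^ 2 / 4 + k) * p ^ 2 * q * hr
          + (k / 2 * q * r) ^ 2 * sq_abs p

/-- The inequality integrates `hardy_pointwise`, whose last term is `div (φ² x / (1 + ‖x‖²))`. -/
theorem hardy_inequality [FiniteDimensional ℝ E] [MeasurableSpace E] [BorelSpace E]
    {μ : Measure E} [μ.IsAddHaarMeasure] (hdim : 2 ≤ Module.finrank ℝ E) {φ : E → ℝ}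
    (hφ : ContDiff ℝ 1 φ) (hsupp : HasCompactSupport φ) :
    (((Module.finrank ℝ E : ℝ) - 2) / 2) ^ 2 * ∫ x, (1 + ‖x‖ ^ 2)⁻¹ * φ x ^ 2 ∂μ ≤
      ∫ x, ‖fderiv ℝ φ x‖ ^ 2 ∂μ := by
  set k : ℝ := (Module.finrank ℝ E : ℝ) - 2 with hk
  have hk_nonneg : 0 ≤ k := sub_nonneg.2 (by exact_mod_cast hdim)
  let η : E → ℝ := fun x => φ x ^ 2 * (1 + ‖x‖ ^ 2)⁻¹
  have hη : ContDiff ℝ 1 η := (hφ.pow 2).mul contDiff_inv_one_add_norm_sq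
  have hη' (x) : fderiv ℝ η x x = 2 * φ x * fderiv ℝ φ x x * (1 + ‖x‖ ^ 2)⁻¹
      - 2 * φ x ^ 2 * ‖x‖ ^ 2 * ((1 + ‖x‖ ^ 2)⁻¹) ^ 2 :=
    fderiv_sq_mul_inv_one_add_norm_sq_apply_self (hφ.differentiable one_ne_zero x)
  have hη_supp : HasCompactSupport η :=
    (hsupp.comp_left (g := (· ^ 2)) (zero_pow two_ne_zero)).mul_right
  have hη_int : Integrable η μ := hη.continuous.integrable_of_hasCompactSupport hη_supp
  have hη'_int : Integrable (fun x => fderiv ℝ η x x) μ := integrable_fderiv_apply_self hη hη_supp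
  have hφ'_supp : HasCompactSupport fun x => ‖fderiv ℝ φ x‖ ^ 2 :=
    (hsupp.fderiv ℝ).norm.comp_left (g := (· ^ 2)) (zero_pow two_ne_zero)
  have hφ'_int : Integrable (fun x => ‖fderiv ℝ φ x‖ ^ 2) μ :=
    ((hφ.continuous_fderiv one_ne_zero).norm.pow 2).integrable_of_hasCompactSupport hφ'_supp
  have hdiv_int : Integrable (fun x => (k + 2) * η x + fderiv ℝ η x x) μ :=
    (hη_int.const_mul _).add hη'_int
  have hdiv : ∫ x, ((k + 2) * η x + fderiv ℝ η x x) ∂μ = 0 := by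
    rw [integral_add (hη_int.const_mul _) hη'_int, integral_const_mul,
      integral_fderiv_apply_self hη hη_supp, hk, smul_eq_mul]
    ring
  calc (k / 2) ^ 2 * ∫ x, (1 + ‖x‖ ^ 2)⁻¹ * φ x ^ 2 ∂μ
      = ∫ x, (k / 2) ^ 2 * ((1 + ‖x‖ ^ 2)⁻¹ * φ x ^ 2) ∂μ := (integral_const_mul _ _).symm
    _ ≤ ∫ x, (‖fderiv ℝ φ x‖ ^ 2 + k / 2 * ((k + 2) * η x + fderiv ℝ η x x)) ∂μ := by
        refine integral_mono (.const_mul (by simpa only [η, mul_comm] using hη_int) _)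
          (hφ'_int.add (hdiv_int.const_mul _)) fun x => ?_
        rw [hη' x]
        exact hardy_pointwise hk_nonneg ((fderiv ℝ φ x).le_opNorm x)
    _ = ∫ x, ‖fderiv ℝ φ x‖ ^ 2 ∂μ := by
        rw [integral_add hφ'_int (hdiv_int.const_mul _), integral_const_mul, hdiv, mul_zero,
          add_zero]

end Hardy

theorem abs_integral_mul_le_sqrt_mul_sqrt {X : Type*} [MeasurableSpace X] {μ : Measure X}
    {f g : X → ℝ} (hf : MemLp f 2 μ) (hg : MemLp g 2 μ) :
    |∫ x, f x * g x ∂μ| ≤ √(∫ x, f x ^ 2 ∂μ) * √(∫ x, g x ^ 2 ∂μ) := by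
  calc |∫ x, f x * g x ∂μ| ≤ ∫ x, ‖f x‖ * ‖g x‖ ∂μ := by
        simpa only [Real.norm_eq_abs, abs_mul] using
          norm_integral_le_integral_norm (μ := μ) fun x => f x * g x
    _ ≤ (∫ x, ‖f x‖ ^ (2 : ℝ) ∂μ) ^ (1 / 2 : ℝ) * (∫ x, ‖g x‖ ^ (2 : ℝ) ∂μ) ^ (1 / 2 : ℝ) :=
        integral_mul_norm_le_Lp_mul_Lq Real.HolderConjugate.two_two (by simpa using hf)
          (by simpa using hg)
    _ = √(∫ x, f x ^ 2 ∂μ) * √(∫ x, g x ^ 2 ∂μ) := by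
        simp only [Real.rpow_two, Real.norm_eq_abs, sq_abs, Real.sqrt_eq_rpow]

theorem norm_le_of_tendsto_of_forall_inner_le {E ι : Type*} [SeminormedAddCommGroup E]
    [InnerProductSpace ℝ E] {l : Filter ι} [l.NeBot] {g : E} {s : ι → E} {K : ℝ} (hK : 0 ≤ K)
    (hs : Tendsto s l (𝓝 g)) (h : ∀ i, ⟪g, s i⟫ ≤ K * ‖s i‖) : ‖g‖ ≤ K := by
  have hg : ‖g‖ * ‖g‖ ≤ K * ‖g‖ := real_inner_self_eq_norm_mul_norm g ▸
    le_of_tendsto_of_tendsto' (tendsto_const_nhds.inner hs) (hs.norm.const_mul K) h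
  rcases (norm_nonneg g).eq_or_lt with hzero | hpos
  · exact hzero ▸ hK
  · exact le_of_mul_le_mul_right hg hpos

section WeightedSpaces

variable {E : Type*} [SeminormedAddCommGroup E]
variable {Ω : Set (Euc N)} {s : ℝ} {f h u : Euc N → ℝ} {v w : Euc N → Euc N}

theorem sq_rpow_half_mul (s : ℝ) (x : E) (a : ℝ) :
    ((1 + ‖x‖ ^ 2) ^ (s / 2) * a) ^ 2 = (1 + ‖x‖ ^ 2) ^ s * a ^ 2 := by
  rw [mul_pow, ← Real.rpow_mul_natCast (by positivity)]
  norm_num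

theorem rpow_half_mul_mul_rpow_neg_half_mul (s : ℝ) (x : E) (a b : ℝ) :
    (1 + ‖x‖ ^ 2) ^ (s / 2) * a * ((1 + ‖x‖ ^ 2) ^ (-s / 2) * b) = a * b := by
  rw [mul_mul_mul_comm, ← Real.rpow_add (by positivity), neg_div, add_neg_cancel, Real.rpow_zero,
    one_mul]

theorem continuous_one_add_norm_sq_rpow (s : ℝ) :
    Continuous fun x : E => (1 + ‖x‖ ^ 2) ^ s :=
  (by fun_prop : Continuous fun x : E => 1 + ‖x‖ ^ 2).rpow_const fun x =>
    .inl (by positivity)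

theorem MemL2.memLp (hu : MemL2 Ω s u) :
    MemLp (fun x => (1 + ‖x‖ ^ 2) ^ (s / 2) * u x) 2 (volume.restrict Ω) :=
  (memLp_two_iff_integrable_sq
    ((continuous_one_add_norm_sq_rpow _).aestronglyMeasurable.mul hu.1)).2 <| by
      simpa only [Pi.mul_apply, sq_rpow_half_mul] using hu.2

theorem MemL2.add (hf : MemL2 Ω s f) (hh : MemL2 Ω s h) : MemL2 Ω s fun x => f x + h x := by
  refine ⟨hf.1.add hh.1, ?_⟩
  simpa only [Pi.add_apply, ← mul_add, sq_rpow_half_mul] using (hf.memLp.add hh.memLp).integrable_sq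

theorem MemL2.integrable_mul (hf : MemL2 Ω s f) (hh : MemL2 Ω (-s) h) :
    Integrable (fun x => f x * h x) (volume.restrict Ω) := by
  simpa only [Pi.mul_def, rpow_half_mul_mul_rpow_neg_half_mul] using
    hf.memLp.integrable_mul hh.memLp

theorem MemL2.abs_integral_mul_le (hf : MemL2 Ω s f) (hh : MemL2 Ω (-s) h) :
    |∫ x in Ω, f x * h x| ≤ nrmL2 Ω s f * nrmL2 Ω (-s) h := by
  simpa only [nrmL2, sqL2, rpow_half_mul_mul_rpow_neg_half_mul, sq_rpow_half_mul] using
    abs_integral_mul_le_sqrt_mul_sqrt hf.memLp hh.memLp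

theorem memL2V_zero_iff_memLp : MemL2V Ω 0 v ↔ MemLp v 2 (volume.restrict Ω) := by
  simp only [MemL2V, Real.rpow_zero, one_mul]
  exact ⟨fun hv => (memLp_two_iff_integrable_sq_norm hv.1).2 hv.2,
    fun hv => ⟨hv.1, (memLp_two_iff_integrable_sq_norm hv.1).1 hv⟩⟩

theorem MemL2V.sub (hv : MemL2V Ω 0 v) (hw : MemL2V Ω 0 w) : MemL2V Ω 0 fun x => v x - w x :=
  memL2V_zero_iff_memLp.2 <| (memL2V_zero_iff_memLp.1 hv).sub (memL2V_zero_iff_memLp.1 hw)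

end WeightedSpaces

theorem cN_pos (hN : 3 ≤ N) : 0 < cN N :=
  div_pos two_pos (sub_pos.2 (by exact_mod_cast hN))

namespace IsTest

variable {Ω : Set (Euc N)} {φ : Euc N → ℝ}

theorem contDiff_one (hφ : IsTest Ω φ) : ContDiff ℝ 1 φ := hφ.1.of_le (by norm_cast)

theorem eq_zero_of_notMem (hφ : IsTest Ω φ) {x : Euc N} (hx : x ∉ Ω) : φ x = 0 :=
  image_eq_zero_of_notMem_tsupport fun h => hx (hφ.2.2 h)

theorem gradient_eq_zero_of_notMem (hφ : IsTest Ω φ) {x : Euc N} (hx : x ∉ Ω) :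
    gradient φ x = 0 := by
  have : fderiv ℝ φ x = 0 := fderiv_of_notMem_tsupport ℝ fun h => hx (hφ.2.2 h)
  simp [gradient, this]

theorem memL2 (hφ : IsTest Ω φ) (s : ℝ) : MemL2 Ω s φ :=
  ⟨hφ.1.continuous.aestronglyMeasurable,
    (((continuous_one_add_norm_sq_rpow s).mul
      (hφ.1.continuous.pow 2)).integrable_of_hasCompactSupport
        (hφ.2.1.comp_left (g := (· ^ 2)) (zero_pow two_ne_zero)).mul_left).restrict⟩

theorem memL2V_gradient (hφ : IsTest Ω φ) : MemL2V Ω 0 (gradient φ) := by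
  let toVec := (InnerProductSpace.toDual ℝ (Euc N)).symm
  have hcont : Continuous (gradient φ) :=
    toVec.continuous.comp (hφ.contDiff_one.continuous_fderiv one_ne_zero)
  have hsupp : HasCompactSupport (gradient φ) :=
    (hφ.2.1.fderiv ℝ).comp_left (g := toVec) (map_zero toVec)
  exact memL2V_zero_iff_memLp.2 ((hcont.memLp_of_hasCompactSupport hsupp).restrict Ω)

theorem nrmL2_neg_one_le (hN : 3 ≤ N) (hφ : IsTest Ω φ) :
    nrmL2 Ω (-1) φ ≤ cN N * nrmL2V Ω 0 (gradient φ) := by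
  have hN' : (0 : ℝ) < N - 2 := sub_pos.2 (by exact_mod_cast hN)
  have hardy : ((N - 2) / 2 : ℝ) ^ 2 * sqL2 Ω (-1) φ ≤ sqL2V Ω 0 (gradient φ) := by
    have h := hardy_inequality (μ := (volume : Measure (Euc N)))
      (by simpa using (Nat.le_succ 2).trans hN) hφ.contDiff_one hφ.2.1
    rw [sqL2, sqL2V, setIntegral_eq_integral_of_forall_compl_eq_zero,
      setIntegral_eq_integral_of_forall_compl_eq_zero]
    · simpa [Real.rpow_neg_one, gradient] using h
    · exact fun x hx => by simp [hφ.gradient_eq_zero_of_notMem hx]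
    · exact fun x hx => by simp [hφ.eq_zero_of_notMem hx]
  have hcN : cN N = ((N - 2) / 2 : ℝ)⁻¹ := (inv_div _ _).symm
  rw [hcN, ← div_eq_inv_mul, le_div_iff₀' (by positivity), nrmL2, nrmL2V,
    ← Real.sqrt_sq (by positivity : (0 : ℝ) ≤ (N - 2) / 2), ← Real.sqrt_mul (sq_nonneg _)]
  exact Real.sqrt_le_sqrt hardy

end IsTest

namespace Coeff

variable {Ω : Set (Euc N)} {u w : Euc N → Euc N}

theorem aestronglyMeasurable_apply (M : Coeff N Ω)
    (hu : AEStronglyMeasurable u (volume.restrict Ω)) :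
    AEStronglyMeasurable (fun x => M.A x (u x)) (volume.restrict Ω) := by
  have hsum (x) : M.A x (u x) = ∑ i, u x i • M.A x (EuclideanSpace.basisFun (Fin N) ℝ i) := by
    conv_lhs => rw [← (EuclideanSpace.basisFun (Fin N) ℝ).sum_repr (u x)]
    simp
  simp only [hsum]
  exact Finset.aestronglyMeasurable_fun_sum _ fun i _ =>
    ((EuclideanSpace.proj i : Euc N →L[ℝ] ℝ).continuous.comp_aestronglyMeasurable hu).smul
      (M.meas _)

theorem integrable_inner (M : Coeff N Ω) (hu : MemL2V Ω 0 u) (hw : MemL2V Ω 0 w) :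
    Integrable (fun x => ⟪M.A x (u x), w x⟫) (volume.restrict Ω) := by
  obtain ⟨C, hC⟩ := M.bdd
  have hAu : MemLp (fun x => M.A x (u x)) 2 (volume.restrict Ω) :=
    (memL2V_zero_iff_memLp.1 hu).of_le_mul (M.aestronglyMeasurable_apply hu.1)
      (hC.mono fun x hx => hx (u x))
  exact (hAu.norm.integrable_mul (memL2V_zero_iff_memLp.1 hw).norm).mono'
    (hAu.1.inner hw.1) (.of_forall fun x => norm_inner_le_norm _ _)

theorem nrmL2V_le (M : Coeff N Ω) (hu : MemL2V Ω 0 u) : nrmL2V Ω 0 u ≤ M.α * nrmA Ω M.A u := by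
  rw [nrmL2V, nrmA, ← Real.sqrt_sq M.α_pos.le, ← Real.sqrt_mul (sq_nonneg _)]
  refine Real.sqrt_le_sqrt ?_
  rw [sqA, ipA, ← integral_const_mul]
  refine integral_mono_ae hu.2 ((M.integrable_inner hu hu).const_mul _) ?_
  filter_upwards [M.coer] with x hx
  have hα := M.α_pos
  simpa [field] using hx (u x)

theorem exists_nrmA_le_mul_nrmL2V (M : Coeff N Ω) :
    ∃ C : ℝ, ∀ u, MemL2V Ω 0 u → nrmA Ω M.A u ≤ C * nrmL2V Ω 0 u := by
  obtain ⟨C, hC⟩ := M.bdd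
  refine ⟨√|C|, fun u hu => ?_⟩
  rw [nrmA, nrmL2V, ← Real.sqrt_mul (abs_nonneg C)]
  refine Real.sqrt_le_sqrt ?_
  rw [sqL2V, ← integral_const_mul]
  refine integral_mono_ae (M.integrable_inner hu hu) (hu.2.const_mul _) ?_
  filter_upwards [hC] with x hx
  calc ⟪M.A x (u x), u x⟫ ≤ ‖M.A x (u x)‖ * ‖u x‖ := real_inner_le_norm _ _
    _ ≤ |C| * ‖u x‖ * ‖u x‖ := by
        gcongr
        exact (hx (u x)).trans (by gcongr; exact le_abs_self C)
    _ = |C| * ((1 + ‖x‖ ^ 2) ^ (0 : ℝ) * ‖u x‖ ^ 2) := by rw [Real.rpow_zero]; ring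

end Coeff

/-- The real vector space of fields representing `L²(Ω;ℝ^N)`, before identifying fields that agree
almost everywhere. -/
def squareIntegrableFields (Ω : Set (Euc N)) : Submodule ℝ (Euc N → Euc N) where
  carrier := {u | MemL2V Ω 0 u}
  add_mem' hu hw :=
    memL2V_zero_iff_memLp.2 ((memL2V_zero_iff_memLp.1 hu).add (memL2V_zero_iff_memLp.1 hw))
  zero_mem' := memL2V_zero_iff_memLp.2 .zero
  smul_mem' c _ hu := memL2V_zero_iff_memLp.2 ((memL2V_zero_iff_memLp.1 hu).const_smul c)

/-- Square integrable fields carrying the energy inner product `⟨u,w⟩_A = ∫_Ω A u · w`. A synonym of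
`squareIntegrableFields Ω` recording the coefficient, on which `ipA` and `nrmA` become the inner
product and the seminorm of a (non-separated) inner product space. -/
def EnergySpace {Ω : Set (Euc N)} (_M : Coeff N Ω) : Type := squareIntegrableFields Ω

namespace EnergySpace

variable {Ω : Set (Euc N)} {M : Coeff N Ω}

instance : AddCommGroup (EnergySpace M) := inferInstanceAs (AddCommGroup (squareIntegrableFields Ω))

instance : Module ℝ (EnergySpace M) := inferInstanceAs (Module ℝ (squareIntegrableFields Ω))

instance : PreInnerProductSpace.Core ℝ (EnergySpace M) where
  inner u w := ipA Ω M.A u.1 w.1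
  conj_inner_symm u w := integral_congr_ae <| .of_forall fun x =>
    (M.symm x _ _).trans (real_inner_comm _ _)
  re_inner_nonneg u := integral_nonneg_of_ae <| M.coer.mono fun x hx =>
    (by positivity : 0 ≤ M.α⁻¹ ^ 2 * ‖u.1 x‖ ^ 2).trans (hx (u.1 x))
  add_left u w z := by
    rw [ipA, ipA, ipA, ← integral_add (M.integrable_inner u.2 z.2) (M.integrable_inner w.2 z.2)]
    refine integral_congr_ae (.of_forall fun x => ?_)
    exact (congrArg (inner ℝ · (z.1 x)) (map_add (M.A x) _ _)).trans (inner_add_left _ _ _)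
  smul_left u w c := by
    rw [ipA, ipA, conj_trivial, ← integral_const_mul]
    refine integral_congr_ae (.of_forall fun x => ?_)
    exact (congrArg (inner ℝ · (w.1 x)) (map_smul (M.A x) c _)).trans (real_inner_smul_left _ _ _)

instance : SeminormedAddCommGroup (EnergySpace M) :=
  InnerProductSpace.Core.toSeminormedAddCommGroup (𝕜 := ℝ)

instance : InnerProductSpace ℝ (EnergySpace M) := InnerProductSpace.ofCore inferInstance

end EnergySpace

namespace Coeff

variable {Ω : Set (Euc N)} {u v w : Euc N → Euc N}

theorem ipA_sub_left (M : Coeff N Ω) (hu : MemL2V Ω 0 u) (hv : MemL2V Ω 0 v) (hw : MemL2V Ω 0 w) :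
    ipA Ω M.A (fun x => u x - v x) w = ipA Ω M.A u w - ipA Ω M.A v w :=
  inner_sub_left (𝕜 := ℝ) (E := EnergySpace M) ⟨u, hu⟩ ⟨v, hv⟩ ⟨w, hw⟩

theorem abs_ipA_le (M : Coeff N Ω) (hu : MemL2V Ω 0 u) (hw : MemL2V Ω 0 w) :
    |ipA Ω M.A u w| ≤ nrmA Ω M.A u * nrmA Ω M.A w :=
  abs_real_inner_le_norm (F := EnergySpace M) ⟨u, hu⟩ ⟨w, hw⟩

end Coeff

section Majorant

variable {Ω : Set (Euc N)} {M : Coeff N Ω} {g e : Euc N → Euc N} {r : Euc N → ℝ}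

theorem IsTest.nrmL2_neg_one_le_nrmA {φ : Euc N → ℝ} (hN : 3 ≤ N) (M : Coeff N Ω)
    (hφ : IsTest Ω φ) : nrmL2 Ω (-1) φ ≤ M.α * cN N * nrmA Ω M.A (gradient φ) :=
  calc nrmL2 Ω (-1) φ ≤ cN N * nrmL2V Ω 0 (gradient φ) := hφ.nrmL2_neg_one_le hN
    _ ≤ cN N * (M.α * nrmA Ω M.A (gradient φ)) :=
        mul_le_mul_of_nonneg_left (M.nrmL2V_le hφ.memL2V_gradient) (cN_pos hN).le
    _ = M.α * cN N * nrmA Ω M.A (gradient φ) := by ring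

theorem MemG.nrmA_le_of_forall_ipA_gradient_le (hg : MemG Ω g) {K : ℝ} (hK : 0 ≤ K)
    (h : ∀ φ, IsTest Ω φ → ipA Ω M.A g (gradient φ) ≤ K * nrmA Ω M.A (gradient φ)) :
    nrmA Ω M.A g ≤ K := by
  obtain ⟨hg_mem, φ, hφ, hlim⟩ := hg
  obtain ⟨C, hC⟩ := M.exists_nrmA_le_mul_nrmL2V
  let gE : EnergySpace M := ⟨g, hg_mem⟩
  let φE n : EnergySpace M := ⟨gradient (φ n), (hφ n).memL2V_gradient⟩
  have hlim_mul :
      Tendsto (fun n => C * nrmL2V Ω 0 fun x => g x - gradient (φ n) x) atTop (𝓝 0) := by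
    simpa only [mul_zero] using hlim.const_mul C
  have hφE : Tendsto φE atTop (𝓝 gE) := by
    refine tendsto_iff_norm_sub_tendsto_zero.2 ?_
    simp only [norm_sub_rev _ gE]
    exact squeeze_zero (fun _ => norm_nonneg _)
      (fun n => hC _ (hg_mem.sub (hφ n).memL2V_gradient)) hlim_mul
  exact norm_le_of_tendsto_of_forall_inner_le (g := gE) hK hφE fun n => h _ (hφ n)

theorem MemG.nrmA_le_of_forall_ipA_gradient_eq (hN : 3 ≤ N) (hg : MemG Ω g) (hr : MemL2 Ω 1 r)
    (he : MemL2V Ω 0 e) (h : ∀ φ, IsTest Ω φ →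
      ipA Ω M.A g (gradient φ) = (∫ x in Ω, r x * φ x) - ipA Ω M.A e (gradient φ)) :
    nrmA Ω M.A g ≤ M.α * cN N * nrmL2 Ω 1 r + nrmA Ω M.A e := by
  have hr_nonneg : 0 ≤ nrmL2 Ω 1 r := Real.sqrt_nonneg _
  have he_nonneg : 0 ≤ nrmA Ω M.A e := Real.sqrt_nonneg _
  have hα := M.α_pos
  have hcN := cN_pos hN
  refine hg.nrmA_le_of_forall_ipA_gradient_le (by positivity) fun φ hφ => ?_
  calc ipA Ω M.A g (gradient φ)
      = (∫ x in Ω, r x * φ x) - ipA Ω M.A e (gradient φ) := h φ hφ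
    _ ≤ nrmL2 Ω 1 r * nrmL2 Ω (-1) φ + nrmA Ω M.A e * nrmA Ω M.A (gradient φ) := by
        rw [sub_eq_add_neg]
        exact add_le_add ((le_abs_self _).trans (hr.abs_integral_mul_le (hφ.memL2 _)))
          ((neg_le_abs _).trans (M.abs_ipA_le he hφ.memL2V_gradient))
    _ ≤ nrmL2 Ω 1 r * (M.α * cN N * nrmA Ω M.A (gradient φ))
          + nrmA Ω M.A e * nrmA Ω M.A (gradient φ) := by
        gcongr
        exact hφ.nrmL2_neg_one_le_nrmA hN M
    _ = (M.α * cN N * nrmL2 Ω 1 r + nrmA Ω M.A e) * nrmA Ω M.A (gradient φ) := by ring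

end Majorant

/-- The fields `p`, `wt` and `w` stand for `∇û`, `A⁻¹ṽ` and `A⁻¹v`. -/
theorem stmt_10_general (Ω : Set (Euc N)) (hN : 3 ≤ N) (M : Coeff N Ω)
    (f : Euc N → ℝ) (hf : MemL2 Ω 1 f) (p : Euc N → Euc N) (hp : MemL2V Ω 0 p)
    (hweak : ∀ φ : Euc N → ℝ, IsTest Ω φ → ipA Ω M.A p (gradient φ) = ∫ x in Ω, f x * φ x)
    (wt : Euc N → Euc N) (hwt : MemL2V Ω 0 wt)
    (g ψ : Euc N → Euc N) (hg : MemG Ω g) (hψ : MemD0 Ω ψ)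
    (hdec : ∀ᵐ x ∂(volume.restrict Ω), M.A x ((p x - wt x) - g x) = ψ x)
    (v : Euc N → Euc N) (dv : Euc N → ℝ) (w : Euc N → Euc N)
    (hdv : MemL2 Ω 1 dv) (hdiv : IsWeakDiv Ω v dv) (hw : IsAInv Ω M.A v w) :
    nrmA Ω M.A g ≤
      M.α * cN N * nrmL2 Ω 1 (fun x => f x + dv x) + nrmA Ω M.A (fun x => wt x - w x) := by
  refine hg.nrmA_le_of_forall_ipA_gradient_eq hN (hf.add hdv) (hwt.sub hw.1) fun φ hφ => ?_
  have hφ_grad := hφ.memL2V_gradient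
  have hψ_eq : ∫ x in Ω, ⟪ψ x, gradient φ x⟫ = ipA Ω M.A (fun x => p x - wt x - g x) (gradient φ) :=
    integral_congr_ae <| hdec.mono fun x hx => by simp only [hx]
  have hv_eq : ∫ x in Ω, ⟪v x, gradient φ x⟫ = ipA Ω M.A w (gradient φ) :=
    integral_congr_ae <| hw.2.mono fun x hx => by simp only [hx]
  have hresidual : ∫ x in Ω, (f x + dv x) * φ x = (∫ x in Ω, f x * φ x) + ∫ x in Ω, dv x * φ x := by
    simp only [add_mul]
    exact integral_add (hf.integrable_mul (hφ.memL2 _)) (hdv.integrable_mul (hφ.memL2 _))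
  rw [hψ.2 φ hφ, M.ipA_sub_left (hp.sub hwt) hg.1 hφ_grad, M.ipA_sub_left hp hwt hφ_grad,
    hweak φ hφ] at hψ_eq
  rw [hdiv φ hφ] at hv_eq
  rw [hresidual, M.ipA_sub_left hwt hw.1 hφ_grad]
  linarith

/-- Non-conforming majorant for the gradient part of the Helmholtz decomposition of
`E = ∇û − A⁻¹ṽ`. -/
theorem stmt_10 (Ω : Set (Euc N)) (hΩ : IsOpen Ω) (hN : 3 ≤ N) (M : Coeff N Ω)
    (f : Euc N → ℝ) (hf : MemL2 Ω 1 f)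
    (uh : Euc N → ℝ) (gu : Euc N → Euc N)
    (huh : MemL2 Ω (-1) uh) (hgu : MemL2V Ω 0 gu) (hguw : IsWeakGrad Ω uh gu)
    (hweak : ∀ φ : Euc N → ℝ, IsTest Ω φ →
      (∫ x in Ω, ⟪M.A x (gu x), gradient φ x⟫) = ∫ x in Ω, f x * φ x)
    (vt : Euc N → Euc N) (hvt : MemL2V Ω 0 vt)
    (wt : Euc N → Euc N) (hwt : IsAInv Ω M.A vt wt)
    (g ψ : Euc N → Euc N) (hg : MemG Ω g) (hψ : MemD0 Ω ψ)
    (hdec : ∀ᵐ x ∂(volume.restrict Ω), M.A x ((gu x - wt x) - g x) = ψ x) :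
    ∀ (v : Euc N → Euc N) (dv : Euc N → ℝ) (w : Euc N → Euc N),
      MemL2V Ω 0 v → MemL2 Ω 1 dv → IsWeakDiv Ω v dv → IsAInv Ω M.A v w →
      nrmA Ω M.A g ≤
        M.α * cN N * nrmL2 Ω 1 (fun x => f x + dv x) +
          nrmA Ω M.A (fun x => wt x - w x) := fun v dv w _ hdv hdiv hw =>
  stmt_10_general Ω hN M f hf gu hgu hweak wt hwt.1 g ψ hg hψ hdec v dv w hdv hdiv hw
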